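/- Let p(x, ξ) = −ξ₀² + 2x₁ξ₀ξ₂ + ξ₁² + x₁³ξ₂² and define the curve γ : ℝ → ℝ³ × ℝ³ by γ(t) = ((t, −t²/4, t⁵/80), (0, t³/8, 1)). Then: (i) p(γ(t)) = 0 for all t ∈ ℝ; (ii) for all t ∈ ℝ, H_p(γ(t)) = (−t²/2)·γ'(t), where H_p = (∂p/∂ξ, −∂p/∂x) is the Hamilton vector field of p, so γ is a reparametrized null bicharacteristic of p; (iii) γ(0) lies in Σ = {x₁ = 0, ξ₀ = ξ₁ = 0} and γ'(0) is tangent to Σ, i.e. the x₁-, ξ₀- and ξ₁-components of γ'(0) all vanish. -/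

import Mathlib

/-- The principal symbol `p(x,ξ) = −ξ₀² + 2x₁ξ₀ξ₂ + ξ₁² + x₁³ξ₂²` of `P_mod`. -/
noncomputable def psym (ρ : (Fin 3 → ℝ) × (Fin 3 → ℝ)) : ℝ :=
  -(ρ.2 0) ^ 2 + 2 * (ρ.1 1) * (ρ.2 0) * (ρ.2 2) + (ρ.2 1) ^ 2 + (ρ.1 1) ^ 3 * (ρ.2 2) ^ 2

/-- The Hamilton vector field `H_p = (∂p/∂ξ, −∂p/∂x)` of `psym` on `ℝ³ × ℝ³`. -/
noncomputable def Hp (ρ : (Fin 3 → ℝ) × (Fin 3 → ℝ)) : (Fin 3 → ℝ) × (Fin 3 → ℝ) :=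
  (fun i => fderiv ℝ psym ρ (0, Pi.single i 1),
   fun i => -(fderiv ℝ psym ρ (Pi.single i 1, 0)))

/-- The curve `γ(t) = ((t, −t²/4, t⁵/80), (0, t³/8, 1))`. -/
noncomputable def tangentCurve (t : ℝ) : (Fin 3 → ℝ) × (Fin 3 → ℝ) :=
  (![t, -t ^ 2 / 4, t ^ 5 / 80], ![0, t ^ 3 / 8, 1])

/-!
Since `p` does not depend on `x₀, x₂`, the flow of `H_p` preserves `ξ₀` and `ξ₂`. On `ξ₀ = 0`,
`ξ₂ = 1` the equation `p = 0` becomes the cusp `ξ₁² = -x₁³`, parametrized by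
`(x₁, ξ₁) = (-s², s³)`. The null bicharacteristics lying over it satisfy `dx₀ = 2x₁ dτ = -2s² dτ`
and `dx₁ = 2ξ₁ dτ`, hence `dx₀ = 2 ds`: parametrizing by `t = x₀ = 2s` instead of the flow
parameter `τ` extends the curve smoothly through the singular set, and `dt/dτ = 2x₁ = -t²/2`.
-/

section PhaseSpace

variable {ι : Type*} (i : ι)

/-- The differential `dxᵢ` of the position coordinate `xᵢ`, used with `dMom` to expand `dp`. -/
def dPos : (ι → ℝ) × (ι → ℝ) →L[ℝ] ℝ :=
  (ContinuousLinearMap.proj i).comp (ContinuousLinearMap.fst ℝ (ι → ℝ) (ι → ℝ))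

/-- The differential `dξᵢ` of the momentum coordinate `ξᵢ`, used with `dPos` to expand `dp`. -/
def dMom : (ι → ℝ) × (ι → ℝ) →L[ℝ] ℝ :=
  (ContinuousLinearMap.proj i).comp (ContinuousLinearMap.snd ℝ (ι → ℝ) (ι → ℝ))

@[simp]
lemma dPos_apply (v : (ι → ℝ) × (ι → ℝ)) : dPos i v = v.1 i := rfl

@[simp]
lemma dMom_apply (v : (ι → ℝ) × (ι → ℝ)) : dMom i v = v.2 i := rfl

end PhaseSpace

lemma hasFDerivAt_psym (ρ : (Fin 3 → ℝ) × (Fin 3 → ℝ)) :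
    HasFDerivAt psym
      ((2 * ρ.2 0 * ρ.2 2 + 3 * ρ.1 1 ^ 2 * ρ.2 2 ^ 2) • dPos 1
        + (2 * ρ.1 1 * ρ.2 2 - 2 * ρ.2 0) • dMom 0
        + (2 * ρ.2 1) • dMom 1
        + (2 * ρ.1 1 * ρ.2 0 + 2 * ρ.1 1 ^ 3 * ρ.2 2) • dMom 2) ρ := by
  have hx₁ := (dPos (1 : Fin 3)).hasFDerivAt (x := ρ)
  have hξ (i : Fin 3) := (dMom i).hasFDerivAt (x := ρ)
  have hp := ((((hξ 0).pow 2).neg.add (((hx₁.const_mul 2).mul (hξ 0)).mul (hξ 2))).add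
    ((hξ 1).pow 2)).add ((hx₁.pow 3).mul ((hξ 2).pow 2))
  refine hp.congr_fderiv (ContinuousLinearMap.ext fun v => ?_)
  simp only [dPos_apply, dMom_apply, add_apply, neg_apply, smul_apply, smul_eq_mul, smul_add,
    nsmul_eq_mul, Pi.mul_apply, Nat.cast_ofNat, Nat.add_one_sub_one, pow_one]
  ring

lemma Hp_eq (ρ : (Fin 3 → ℝ) × (Fin 3 → ℝ)) :
    Hp ρ =
      (![2 * ρ.1 1 * ρ.2 2 - 2 * ρ.2 0, 2 * ρ.2 1, 2 * ρ.1 1 * ρ.2 0 + 2 * ρ.1 1 ^ 3 * ρ.2 2],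
        ![0, -(2 * ρ.2 0 * ρ.2 2 + 3 * ρ.1 1 ^ 2 * ρ.2 2 ^ 2), 0]) := by
  ext i <;> fin_cases i <;> simp [Hp, (hasFDerivAt_psym ρ).fderiv]

/-- The points of the null set `p = 0` with `ξ₀ = 0` and given `ξ₂ ≠ 0`: there `p = 0` is the cusp
`ξ₁² = -ξ₂² x₁³`, parametrized by `s = -ξ₁ / (ξ₂ x₁)`, with `s = 0` at the singular point. -/
def cuspPoint (x₀ x₂ ξ₂ s : ℝ) : (Fin 3 → ℝ) × (Fin 3 → ℝ) :=
  (![x₀, -s ^ 2, x₂], ![0, ξ₂ * s ^ 3, ξ₂])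

lemma psym_cuspPoint (x₀ x₂ ξ₂ s : ℝ) : psym (cuspPoint x₀ x₂ ξ₂ s) = 0 := by
  simp only [psym, cuspPoint, Matrix.cons_val]
  ring

lemma Hp_cuspPoint (x₀ x₂ ξ₂ s : ℝ) :
    Hp (cuspPoint x₀ x₂ ξ₂ s) =
      (-2 * ξ₂ * s ^ 2) • (![1, -s, s ^ 4], ![0, 3 / 2 * ξ₂ * s ^ 2, 0]) := by
  rw [Hp_eq]
  ext i <;> fin_cases i <;>
    simp only [cuspPoint, Prod.smul_mk, Matrix.smul_cons, Matrix.smul_empty, smul_eq_mul,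
      Matrix.cons_val, Fin.zero_eta, Fin.mk_one, Fin.reduceFinMk] <;>
    ring

lemma tangentCurve_eq_cuspPoint (t : ℝ) :
    tangentCurve t = cuspPoint t (t ^ 5 / 80) 1 (t / 2) := by
  have hx₁ : -t ^ 2 / 4 = -(t / 2) ^ 2 := by ring
  have hξ₁ : t ^ 3 / 8 = 1 * (t / 2) ^ 3 := by ring
  rw [tangentCurve, cuspPoint, hx₁, hξ₁]

lemma hasDerivAt_tangentCurve (t : ℝ) :
    HasDerivAt tangentCurve
      (![1, -(t / 2), (t / 2) ^ 4], ![0, 3 / 2 * (t / 2) ^ 2, 0]) t := by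
  have hx₁ : HasDerivAt (fun t : ℝ => -t ^ 2 / 4) (-(t / 2)) t :=
    ((hasDerivAt_pow 2 t).neg.div_const 4).congr_deriv (by push_cast; ring)
  have hx₂ : HasDerivAt (fun t : ℝ => t ^ 5 / 80) ((t / 2) ^ 4) t :=
    ((hasDerivAt_pow 5 t).div_const 80).congr_deriv (by push_cast; ring)
  have hξ₁ : HasDerivAt (fun t : ℝ => t ^ 3 / 8) (3 / 2 * (t / 2) ^ 2) t :=
    ((hasDerivAt_pow 3 t).div_const 8).congr_deriv (by push_cast; ring)
  refine .prodMk (hasDerivAt_pi.2 fun i => ?_) (hasDerivAt_pi.2 fun i => ?_)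
  · fin_cases i
    exacts [hasDerivAt_id t, hx₁, hx₂]
  · fin_cases i
    exacts [hasDerivAt_const t 0, hξ₁, hasDerivAt_const t 1]

lemma psym_tangentCurve (t : ℝ) : psym (tangentCurve t) = 0 := by
  rw [tangentCurve_eq_cuspPoint, psym_cuspPoint]

lemma Hp_tangentCurve (t : ℝ) :
    Hp (tangentCurve t) = (-(t ^ 2) / 2) • deriv tangentCurve t := by
  have hspeed : -2 * 1 * (t / 2) ^ 2 = -(t ^ 2) / 2 := by ring
  rw [tangentCurve_eq_cuspPoint, Hp_cuspPoint, (hasDerivAt_tangentCurve t).deriv, hspeed, mul_one]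

/-- The curve `γ(t) = ((t, −t²/4, t⁵/80), (0, t³/8, 1))` is a reparametrized null
bicharacteristic of `p` which is tangent to `Σ = {x₁ = 0, ξ₀ = ξ₁ = 0}` at `γ(0)`:
(i) `p(γ(t)) = 0`; (ii) `H_p(γ(t)) = (−t²/2)·γ'(t)`;
(iii) `γ(0) ∈ Σ` and the `x₁`-, `ξ₀`- and `ξ₁`-components of `γ'(0)` vanish. -/
theorem tangent_bicharacteristic :
    (∀ t : ℝ, psym (tangentCurve t) = 0) ∧
    (∀ t : ℝ, Hp (tangentCurve t) = (-(t ^ 2) / 2) • deriv tangentCurve t) ∧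
    ((tangentCurve 0).1 1 = 0 ∧ (tangentCurve 0).2 0 = 0 ∧ (tangentCurve 0).2 1 = 0) ∧
    ((deriv tangentCurve 0).1 1 = 0 ∧ (deriv tangentCurve 0).2 0 = 0 ∧
      (deriv tangentCurve 0).2 1 = 0) := by
  refine ⟨psym_tangentCurve, Hp_tangentCurve, ?_, ?_⟩
  · simp [tangentCurve]
  · simp [(hasDerivAt_tangentCurve 0).deriv]
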